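/- arXiv:1601.01130 — 3 statements merged into one kernel-verified Lean document; each statement's English description precedes it below -/
import Mathlib

section
/- Let d ≥ 1, m > 0 and K ≠ 0 be real, λ ∈ ℂ, and let A : ℝ × ℝ^d → ℂ be a C² function and U : ℝ^d → ℝ. Define ψ : ℝ × ℝ^d → ℂ by ψ = exp(i·A/K) (so ψ is nowhere zero). Then at every point (t,x), the complex Hamilton–Jacobi equation ∂A/∂t + (1/(2m))·Σ_{k=1}^d (∂A/∂x_k)² + (λ/2)·ΔA + U = 0 holds if and only if the non-linear Schrödinger equation i·K·∂ψ/∂t + (i·K·λ/2)·Δψ + (Σ_{k=1}^d (∂ψ/∂x_k)²/ψ)·(K/m − i·λ)·(K/2) − U·ψ = 0 holds. -/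
noncomputable section

variable {d : ℕ} {F : Type*} [NormedAddCommGroup F] [NormedSpace ℝ F]

/-- Spatial partial derivative in the `k`-th coordinate of a function on `ℝ × ℝ^d`. -/
def pd (k : Fin d) (f : ℝ × (Fin d → ℝ) → F) : ℝ × (Fin d → ℝ) → F :=
  fun p => fderiv ℝ (fun y => f (p.1, y)) p.2 (Pi.single k 1)

/-- Time derivative of a function on `ℝ × ℝ^d`. -/
def tdiff (f : ℝ × (Fin d → ℝ) → F) : ℝ × (Fin d → ℝ) → F :=
  fun p => deriv (fun s => f (s, p.2)) p.1

/-- Spatial Laplacian of a function on `ℝ × ℝ^d`. -/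
def lap (f : ℝ × (Fin d → ℝ) → F) : ℝ × (Fin d → ℝ) → F :=
  fun p => ∑ k : Fin d, pd k (pd k f) p

/-!
For `ψ = exp f` one has `∂ψ = ∂f · ψ` and `Δψ = (Δf + ∑ (∂ₖf)²) ψ`. The coefficient
`(K/m - iλ) K/2` is chosen so that the `λ ∑ (∂ₖf)²` terms coming from `Δψ` and from `∑ (∂ₖψ)² / ψ`
cancel. For `f = iA/K`, what is left is `-ψ` times the Hamilton–Jacobi expression.
-/

open Complex Filter Topology

/-- The left-hand side of the complex Hamilton–Jacobi equation for the action `A`, with mass `m`,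
second-order coefficient `lam` and potential `U`. The parameters may be complex, and `U` may depend
on time. -/
def hamiltonJacobi (m lam : ℂ) (U A : ℝ × (Fin d → ℝ) → ℂ) : ℝ × (Fin d → ℝ) → ℂ :=
  fun p => tdiff A p + (1 / (2 * m)) * ∑ k : Fin d, (pd k A p) ^ 2 + (lam / 2) * lap A p + U p

/-- The left-hand side of the non-linear Schrödinger equation for the wave function `ψ`, with
mass `m`, action scale `K`, second-order coefficient `lam` and potential `U`. -/
def nonlinearSchrodinger (m K lam : ℂ) (U ψ : ℝ × (Fin d → ℝ) → ℂ) : ℝ × (Fin d → ℝ) → ℂ :=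
  fun p => I * K * tdiff ψ p + (I * K * lam / 2) * lap ψ p
    + ((∑ k : Fin d, (pd k ψ p) ^ 2) / ψ p) * (K / m - I * lam) * (K / 2) - U p * ψ p

lemma tdiff_const_mul {𝕜 : Type*} [NormedField 𝕜] [NormedAlgebra ℝ 𝕜] (c : 𝕜)
    (f : ℝ × (Fin d → ℝ) → 𝕜) :
    tdiff (fun p => c * f p) = fun p => c * tdiff f p :=
  funext fun _ => deriv_const_mul_field c

lemma pd_const_mul {𝕜 : Type*} [NormedField 𝕜] [NormedAlgebra ℝ 𝕜] (c : 𝕜) (k : Fin d)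
    (f : ℝ × (Fin d → ℝ) → 𝕜) :
    pd k (fun p => c * f p) = fun p => c * pd k f p := by
  funext p
  have slice : fderiv ℝ (fun y => c * f (p.1, y)) = c • fderiv ℝ (fun y => f (p.1, y)) :=
    fderiv_const_smul_field c
  exact congr($slice p.2 (Pi.single k 1))

lemma lap_const_mul {𝕜 : Type*} [NormedField 𝕜] [NormedAlgebra ℝ 𝕜] (c : 𝕜)
    (f : ℝ × (Fin d → ℝ) → 𝕜) :
    lap (fun p => c * f p) = fun p => c * lap f p := by
  funext p
  simp only [lap, pd_const_mul, Finset.mul_sum]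

lemma pd_mul {𝔸 : Type*} [NormedRing 𝔸] [NormedAlgebra ℝ 𝔸] (k : Fin d)
    {f g : ℝ × (Fin d → ℝ) → 𝔸} {t : ℝ} {x : Fin d → ℝ}
    (hf : DifferentiableAt ℝ (fun y => f (t, y)) x)
    (hg : DifferentiableAt ℝ (fun y => g (t, y)) x) :
    pd k (fun p => f p * g p) (t, x) = f (t, x) * pd k g (t, x) + pd k f (t, x) * g (t, x) :=
  congr($(fderiv_fun_mul' hf hg) (Pi.single k 1))

lemma differentiableAt_pd (k : Fin d) {f : ℝ × (Fin d → ℝ) → F} {t : ℝ} {x : Fin d → ℝ}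
    (hf : ContDiffAt ℝ 2 (fun y => f (t, y)) x) :
    DifferentiableAt ℝ (fun y => pd k f (t, y)) x :=
  ((hf.fderiv_right (m := 1) (by norm_num)).differentiableAt one_ne_zero).clm_apply
    (differentiableAt_const _)

section Exponential

variable {f : ℝ × (Fin d → ℝ) → ℂ} {t : ℝ} {x : Fin d → ℝ}

lemma tdiff_cexp (hf : DifferentiableAt ℝ (fun s => f (s, x)) t) :
    tdiff (fun p => exp (f p)) (t, x) = tdiff f (t, x) * exp (f (t, x)) :=
  (deriv_cexp hf).trans (mul_comm _ _)

lemma pd_cexp (k : Fin d) (hf : DifferentiableAt ℝ (fun y => f (t, y)) x) :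
    pd k (fun p => exp (f p)) (t, x) = pd k f (t, x) * exp (f (t, x)) :=
  congr($(hf.hasFDerivAt.cexp.fderiv) (Pi.single k 1)).trans (mul_comm _ _)

lemma pd_pd_cexp (k : Fin d) (hf : ∀ᶠ y in 𝓝 x, DifferentiableAt ℝ (fun z => f (t, z)) y)
    (hpd : DifferentiableAt ℝ (fun y => pd k f (t, y)) x) :
    pd k (pd k fun p => exp (f p)) (t, x)
      = (pd k (pd k f) (t, x) + pd k f (t, x) ^ 2) * exp (f (t, x)) := by
  have hpd_near : (fun y => pd k (fun p => exp (f p)) (t, y))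
      =ᶠ[𝓝 x] fun y => pd k f (t, y) * exp (f (t, y)) := hf.mono fun y hy => pd_cexp k hy
  calc pd k (pd k fun p => exp (f p)) (t, x)
      = pd k (fun p => pd k f p * exp (f p)) (t, x) :=
        congr($(hpd_near.fderiv_eq) (Pi.single k 1))
    _ = pd k f (t, x) * (pd k f (t, x) * exp (f (t, x)))
          + pd k (pd k f) (t, x) * exp (f (t, x)) := by
        rw [pd_mul k hpd hf.self_of_nhds.cexp, pd_cexp k hf.self_of_nhds]
    _ = (pd k (pd k f) (t, x) + pd k f (t, x) ^ 2) * exp (f (t, x)) := by ring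

lemma lap_cexp (hf : ∀ᶠ y in 𝓝 x, DifferentiableAt ℝ (fun z => f (t, z)) y)
    (hpd : ∀ k, DifferentiableAt ℝ (fun y => pd k f (t, y)) x) :
    lap (fun p => exp (f p)) (t, x)
      = (lap f (t, x) + ∑ k : Fin d, pd k f (t, x) ^ 2) * exp (f (t, x)) := by
  simp only [lap, pd_pd_cexp _ hf (hpd _), ← Finset.sum_mul, Finset.sum_add_distrib]

lemma sum_pd_cexp_sq (hf : DifferentiableAt ℝ (fun y => f (t, y)) x) :
    ∑ k : Fin d, pd k (fun p => exp (f p)) (t, x) ^ 2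
      = (∑ k : Fin d, pd k f (t, x) ^ 2) * exp (f (t, x)) ^ 2 := by
  simp only [pd_cexp _ hf, mul_pow, ← Finset.sum_mul]

lemma nonlinearSchrodinger_cexp (m K lam : ℂ) (U : ℝ × (Fin d → ℝ) → ℂ)
    (hft : DifferentiableAt ℝ (fun s => f (s, x)) t)
    (hfx : ∀ᶠ y in 𝓝 x, DifferentiableAt ℝ (fun z => f (t, z)) y)
    (hpd : ∀ k, DifferentiableAt ℝ (fun y => pd k f (t, y)) x) :
    nonlinearSchrodinger m K lam U (fun p => exp (f p)) (t, x)
      = exp (f (t, x)) * (I * K * tdiff f (t, x) + (I * K * lam / 2) * lap f (t, x)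
          + K ^ 2 / (2 * m) * ∑ k : Fin d, pd k f (t, x) ^ 2 - U (t, x)) := by
  rw [nonlinearSchrodinger, tdiff_cexp hft, lap_cexp hfx hpd, sum_pd_cexp_sq hfx.self_of_nhds]
  have exp_ne := exp_ne_zero (f (t, x))
  field_simp
  ring

end Exponential

lemma nonlinearSchrodinger_cexp_div {m K : ℂ} (hK : K ≠ 0) (lam : ℂ)
    (U : ℝ × (Fin d → ℝ) → ℂ) {A : ℝ × (Fin d → ℝ) → ℂ} {t : ℝ} {x : Fin d → ℝ}
    (hAt : DifferentiableAt ℝ (fun s => A (s, x)) t)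
    (hAx : ∀ᶠ y in 𝓝 x, DifferentiableAt ℝ (fun z => A (t, z)) y)
    (hAxx : ∀ k, DifferentiableAt ℝ (fun y => pd k A (t, y)) x) :
    nonlinearSchrodinger m K lam U (fun p => exp (I * A p / K)) (t, x)
      = -exp (I * A (t, x) / K) * hamiltonJacobi m lam U A (t, x) := by
  have phase_pd : ∀ k, DifferentiableAt ℝ (fun y => pd k (fun p => I / K * A p) (t, y)) x := by
    simpa only [pd_const_mul] using fun k => (hAxx k).const_mul (I / K)
  simp only [mul_div_right_comm I]
  rw [nonlinearSchrodinger_cexp m K lam U (hAt.const_mul _)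
    (hAx.mono fun _ hy => hy.const_mul _) phase_pd]
  simp only [hamiltonJacobi, tdiff_const_mul, lap_const_mul, pd_const_mul, mul_pow,
    ← Finset.mul_sum]
  have first_order : I * K * (I / K) = -1 := by rw [mul_assoc, mul_div_cancel₀ _ hK, I_mul_I]
  have second_order : K ^ 2 * (I / K) ^ 2 = -1 := by rw [← mul_pow, mul_div_cancel₀ _ hK, I_sq]
  linear_combination exp (I / K * A (t, x))
    * ((tdiff A (t, x) + lam / 2 * lap A (t, x)) * first_order
      + 1 / (2 * m) * (∑ k : Fin d, pd k A (t, x) ^ 2) * second_order)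

theorem HJ_iff_nonlinear_schrodinger_general {m K : ℂ} (_hm : m ≠ 0) (hK : K ≠ 0) (lam : ℂ)
    (U : ℝ × (Fin d → ℝ) → ℂ) {A : ℝ × (Fin d → ℝ) → ℂ} {t : ℝ} {x : Fin d → ℝ}
    (hAt : DifferentiableAt ℝ (fun s => A (s, x)) t)
    (hAx : ∀ᶠ y in 𝓝 x, DifferentiableAt ℝ (fun z => A (t, z)) y)
    (hAxx : ∀ k, DifferentiableAt ℝ (fun y => pd k A (t, y)) x) :
    hamiltonJacobi m lam U A (t, x) = 0 ↔
      nonlinearSchrodinger m K lam U (fun p => exp (I * A p / K)) (t, x) = 0 := by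
  rw [nonlinearSchrodinger_cexp_div hK lam U hAt hAx hAxx, mul_eq_zero,
    or_iff_right (neg_ne_zero.mpr (exp_ne_zero _))]

/-- The complex Hamilton–Jacobi equation for `A` is equivalent to the non-linear
Schrödinger equation for `ψ = exp(i·A/K)`. -/
theorem HJ_iff_nonlinear_schrodinger
    (d : ℕ) (hd : 1 ≤ d) (m K : ℝ) (hm : 0 < m) (hK : K ≠ 0) (lam : ℂ)
    (A : ℝ × (Fin d → ℝ) → ℂ) (hA : ContDiff ℝ 2 A)
    (U : (Fin d → ℝ) → ℝ)
    (ψ : ℝ × (Fin d → ℝ) → ℂ)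
    (hψ : ψ = fun p => Complex.exp (Complex.I * A p / (K : ℂ)))
    (t : ℝ) (x : Fin d → ℝ) :
    (tdiff A (t, x) + (1 / (2 * (m : ℂ))) * ∑ k : Fin d, (pd k A (t, x)) ^ 2
        + (lam / 2) * lap A (t, x) + (U x : ℂ) = 0) ↔
      (Complex.I * (K : ℂ) * tdiff ψ (t, x)
        + (Complex.I * (K : ℂ) * lam / 2) * lap ψ (t, x)
        + ((∑ k : Fin d, (pd k ψ (t, x)) ^ 2) / ψ (t, x))
            * ((K : ℂ) / (m : ℂ) - Complex.I * lam) * ((K : ℂ) / 2)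
        - (U x : ℂ) * ψ (t, x) = 0) := by
  subst hψ
  have time_slice : ContDiff ℝ 2 (fun s => A (s, x)) := hA.comp (contDiff_prodMk_left x)
  have space_slice : ContDiff ℝ 2 (fun y => A (t, y)) := hA.comp (contDiff_prodMk_right t)
  exact HJ_iff_nonlinear_schrodinger_general (ofReal_ne_zero.mpr hm.ne') (ofReal_ne_zero.mpr hK)
    lam (fun p => (U p.2 : ℂ)) (time_slice.differentiable two_ne_zero t)
    (.of_forall (space_slice.differentiable two_ne_zero))
    fun k => differentiableAt_pd k space_slice.contDiffAt
end
end

section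
/- Let d ≥ 1, m > 0, Λ ∈ ℝ and K ≠ 0 be real. Let S : ℝ × ℝ^d → ℝ and P : ℝ × ℝ^d → (0,∞) be C² functions and U : ℝ^d → ℝ. Define ψ = √P · exp(i·S/K). Then at every point (t,x), the non-linear Schrödinger equation i·K·∂ψ/∂t + (K·Λ/2)·Δψ + (Σ_{k=1}^d (∂ψ/∂x_k)²/ψ)·(K/m − Λ)·(K/2) − U·ψ = 0 holds if and only if both real equations hold: (i) ∂S/∂t + |∇S|²/(2m) − (K²/(2m))·(Δ√P)/√P + (K/2)·(K/m − Λ)·Δ(log √P) + U = 0, and (ii) ∂P/∂t + div(P·∇S/m) + (P·ΔS/m)·(m·Λ/K − 1) = 0. -/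
noncomputable section

variable {d : ℕ} {F : Type*} [NormedAddCommGroup F] [NormedSpace ℝ F]

/-! Write `L = log √P` and `φ = L + i S / K`, so that `ψ = exp φ` wherever `P > 0`. Since
`∂ψ = ψ ∂φ` and `Δψ = ψ (Δφ + ∑ₖ (∂ₖφ)²)`, division by `ψ` turns the Schrödinger equation into
`i K ∂ₜφ + (K Λ / 2) Δφ + (K² / (2 m)) ∑ₖ (∂ₖφ)² - U = 0`. Its real part is minus equation (i),
because `Δ√P / √P = ΔL + |∇L|²`, and its imaginary part is `K / (2 P)` times equation (ii),
because `∂P = 2 P ∂L`. -/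

open Filter Topology

section DirectionalDerivatives

variable {E : Type*} [NormedAddCommGroup E] [NormedSpace ℝ E]
  {A : Type*} [NormedCommRing A] [NormedAlgebra ℝ A] [CompleteSpace A]

lemma fderiv_normedSpaceExp_apply {g : E → A} {x : E} (hg : DifferentiableAt ℝ g x) (v : E) :
    fderiv ℝ (fun y => NormedSpace.exp (g y)) x v = NormedSpace.exp (g x) * fderiv ℝ g x v := by
  have hexp : HasFDerivAt (fun y => NormedSpace.exp (g y)) _ x :=
    (hasFDerivAt_exp (𝕂 := ℝ)).comp x hg.hasFDerivAt
  simp [hexp.fderiv]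

lemma differentiableAt_fderiv_apply {g : E → F} {x : E} (hg : ContDiffAt ℝ 2 g x) (v : E) :
    DifferentiableAt ℝ (fun y => fderiv ℝ g y v) x :=
  ((hg.fderiv_right (m := 1) (by norm_num)).differentiableAt (by norm_num)).clm_apply
    (differentiableAt_const v)

lemma fderiv_fderiv_normedSpaceExp_apply {g : E → A} {x : E} (hg : ContDiffAt ℝ 2 g x) (v : E) :
    fderiv ℝ (fun y => fderiv ℝ (fun z => NormedSpace.exp (g z)) y v) x v =
      NormedSpace.exp (g x) *
        (fderiv ℝ (fun y => fderiv ℝ g y v) x v + fderiv ℝ g x v ^ 2) := by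
  have hfirst : (fun y => fderiv ℝ (fun z => NormedSpace.exp (g z)) y v) =ᶠ[𝓝 x]
      fun y => NormedSpace.exp (g y) * fderiv ℝ g y v := by
    filter_upwards [hg.eventually (by simp)] with y hy
    exact fderiv_normedSpaceExp_apply (hy.differentiableAt (by norm_num)) v
  have hg' := hg.differentiableAt (by norm_num)
  have hexp : DifferentiableAt ℝ (fun y => NormedSpace.exp (g y)) x :=
    (hasFDerivAt_exp (𝕂 := ℝ)).differentiableAt.comp x hg'
  rw [hfirst.fderiv_eq, fderiv_fun_mul hexp (differentiableAt_fderiv_apply hg v)]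
  simp only [add_apply, smul_apply, smul_eq_mul, fderiv_normedSpaceExp_apply hg']
  ring

lemma fderiv_ofReal_add_const_mul_apply {f g : E → ℝ} {x : E} (hf : DifferentiableAt ℝ f x)
    (hg : DifferentiableAt ℝ g x) (c : ℂ) (v : E) :
    fderiv ℝ (fun y => (f y : ℂ) + c * (g y : ℂ)) x v =
      (fderiv ℝ f x v : ℂ) + c * (fderiv ℝ g x v : ℂ) := by
  have hcomb : HasFDerivAt (fun y => (f y : ℂ) + c * (g y : ℂ)) _ x :=
    (Complex.ofRealCLM.hasFDerivAt.comp x hf.hasFDerivAt).add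
      ((Complex.ofRealCLM.hasFDerivAt.comp x hg.hasFDerivAt).const_mul c)
  simp [hcomb.fderiv]

lemma fderiv_fderiv_ofReal_add_const_mul_apply {f g : E → ℝ} {x : E} (hf : ContDiffAt ℝ 2 f x)
    (hg : ContDiffAt ℝ 2 g x) (c : ℂ) (v : E) :
    fderiv ℝ (fun y => fderiv ℝ (fun z => (f z : ℂ) + c * (g z : ℂ)) y v) x v =
      (fderiv ℝ (fun y => fderiv ℝ f y v) x v : ℂ) +
        c * (fderiv ℝ (fun y => fderiv ℝ g y v) x v : ℂ) := by
  have hfirst : (fun y => fderiv ℝ (fun z => (f z : ℂ) + c * (g z : ℂ)) y v) =ᶠ[𝓝 x]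
      fun y => (fderiv ℝ f y v : ℂ) + c * (fderiv ℝ g y v : ℂ) := by
    filter_upwards [hf.eventually (by simp), hg.eventually (by simp)] with y hfy hgy
    exact fderiv_ofReal_add_const_mul_apply (hfy.differentiableAt (by norm_num))
      (hgy.differentiableAt (by norm_num)) c v
  rw [hfirst.fderiv_eq]
  exact fderiv_ofReal_add_const_mul_apply (differentiableAt_fderiv_apply hf v)
    (differentiableAt_fderiv_apply hg v) c v

lemma fderiv_log_sqrt_apply {g : E → ℝ} {x : E} (hg : DifferentiableAt ℝ g x) (hpos : 0 < g x)
    (v : E) :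
    fderiv ℝ (fun y => Real.log (Real.sqrt (g y))) x v = fderiv ℝ g x v / (2 * g x) := by
  rw [((hg.hasFDerivAt.sqrt hpos.ne').log (Real.sqrt_pos.2 hpos).ne').fderiv]
  have hsqrt := (Real.sqrt_pos.2 hpos).ne'
  simp only [smul_apply, smul_eq_mul]
  field_simp
  rw [Real.sq_sqrt hpos.le, mul_comm]

end DirectionalDerivatives

section Slices

variable {G : Type*} [NormedAddCommGroup G] [NormedSpace ℝ G]

/-- The filter of sets containing a neighbourhood of `p` in the time line through `p` and a
neighbourhood of `p` in the space slice through `p`. Since `tdiff`, `pd` and `lap` differentiate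
along these two slices only, their values at `p` depend only on germs along this filter, which is
finer than `𝓝 p`. -/
def crossNhds (p : ℝ × (Fin d → ℝ)) : Filter (ℝ × (Fin d → ℝ)) :=
  (𝓝 p.1).map (fun s => (s, p.2)) ⊔ (𝓝 p.2).map (fun y => (p.1, y))

/-- Parabolic regularity `C^{1,2}` at a point, in the weak form sufficient for pointwise
second-order evolution equations: differentiable in time along the time line through `p`, and `C²`
in space along the space slice through `p`, with no joint regularity. -/
structure C12At (f : ℝ × (Fin d → ℝ) → F) (p : ℝ × (Fin d → ℝ)) : Prop where
  time : DifferentiableAt ℝ (fun s => f (s, p.2)) p.1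
  space : ContDiffAt ℝ 2 (fun y => f (p.1, y)) p.2

variable {p : ℝ × (Fin d → ℝ)} {f g : ℝ × (Fin d → ℝ) → F}

lemma eventuallyEq_crossNhds {α : Type*} {f g : ℝ × (Fin d → ℝ) → α} :
    f =ᶠ[crossNhds p] g ↔
      ((fun s => f (s, p.2)) =ᶠ[𝓝 p.1] fun s => g (s, p.2)) ∧
        ((fun y => f (p.1, y)) =ᶠ[𝓝 p.2] fun y => g (p.1, y)) :=
  eventually_sup

lemma eq_of_eventuallyEq_crossNhds {α : Type*} {f g : ℝ × (Fin d → ℝ) → α}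
    (h : f =ᶠ[crossNhds p] g) : f p = g p :=
  (eventuallyEq_crossNhds.1 h).1.eq_of_nhds

lemma tdiff_congr (h : f =ᶠ[crossNhds p] g) : tdiff f p = tdiff g p :=
  (eventuallyEq_crossNhds.1 h).1.deriv_eq

lemma pd_congr (h : f =ᶠ[crossNhds p] g) (k : Fin d) : pd k f p = pd k g p :=
  DFunLike.congr_fun (eventuallyEq_crossNhds.1 h).2.fderiv_eq (Pi.single k 1)

lemma lap_congr (h : f =ᶠ[crossNhds p] g) : lap f p = lap g p := by
  refine Finset.sum_congr rfl fun k _ => ?_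
  have hpd : (fun y => pd k f (p.1, y)) =ᶠ[𝓝 p.2] fun y => pd k g (p.1, y) :=
    (eventuallyEq_crossNhds.1 h).2.fderiv.mono fun _ hy => DFunLike.congr_fun hy (Pi.single k 1)
  exact DFunLike.congr_fun hpd.fderiv_eq (Pi.single k 1)

namespace C12At

lemma of_contDiff (hf : ContDiff ℝ 2 f) (p : ℝ × (Fin d → ℝ)) : C12At f p where
  time := ((hf.comp (contDiff_id.prodMk contDiff_const)).differentiable
    (by norm_num)).differentiableAt
  space := (hf.comp (contDiff_const.prodMk contDiff_id)).contDiffAt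

lemma tendsto (hf : C12At f p) : Tendsto f (crossNhds p) (𝓝 (f p)) :=
  tendsto_sup.2 ⟨tendsto_map'_iff.2 hf.time.continuousAt, tendsto_map'_iff.2 hf.space.continuousAt⟩

lemma comp {h : F → G} (hf : C12At f p) (hh : ContDiffAt ℝ 2 h (f p)) :
    C12At (fun q => h (f q)) p where
  time := (hh.differentiableAt (by norm_num)).comp p.1 hf.time
  space := ContDiffAt.comp p.2 hh hf.space

lemma add (hf : C12At f p) (hg : C12At g p) : C12At (fun q => f q + g q) p where
  time := hf.time.add hg.time
  space := hf.space.add hg.space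

lemma log_sqrt {f : ℝ × (Fin d → ℝ) → ℝ} (hf : C12At f p) (hpos : 0 < f p) :
    C12At (fun q => Real.log (Real.sqrt (f q))) p :=
  hf.comp (h := fun r => Real.log (Real.sqrt r))
    ((Real.contDiffAt_sqrt hpos.ne').log (Real.sqrt_pos.2 hpos).ne')

lemma differentiableAt_pd (hf : C12At f p) (k : Fin d) :
    DifferentiableAt ℝ (fun y => pd k f (p.1, y)) p.2 :=
  differentiableAt_fderiv_apply hf.space _

end C12At

end Slices

section SpacetimeDerivatives

variable {p : ℝ × (Fin d → ℝ)}

section Exponential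

variable {A : Type*} [NormedCommRing A] [NormedAlgebra ℝ A] [CompleteSpace A]
  {φ : ℝ × (Fin d → ℝ) → A}

lemma tdiff_normedSpaceExp (hφ : C12At φ p) :
    tdiff (fun q => NormedSpace.exp (φ q)) p = NormedSpace.exp (φ p) * tdiff φ p :=
  fderiv_normedSpaceExp_apply hφ.time 1

lemma pd_normedSpaceExp (hφ : C12At φ p) (k : Fin d) :
    pd k (fun q => NormedSpace.exp (φ q)) p = NormedSpace.exp (φ p) * pd k φ p :=
  fderiv_normedSpaceExp_apply (hφ.space.differentiableAt (by norm_num)) _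

lemma lap_normedSpaceExp (hφ : C12At φ p) :
    lap (fun q => NormedSpace.exp (φ q)) p =
      NormedSpace.exp (φ p) * (lap φ p + ∑ k, pd k φ p ^ 2) := by
  simp only [lap, ← Finset.sum_add_distrib, Finset.mul_sum]
  exact Finset.sum_congr rfl fun k _ => fderiv_fderiv_normedSpaceExp_apply hφ.space _

end Exponential

variable {f g : ℝ × (Fin d → ℝ) → ℝ}

lemma tdiff_log_sqrt (hf : C12At f p) (hpos : 0 < f p) :
    tdiff (fun q => Real.log (Real.sqrt (f q))) p = tdiff f p / (2 * f p) :=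
  fderiv_log_sqrt_apply hf.time hpos 1

lemma pd_log_sqrt (hf : C12At f p) (hpos : 0 < f p) (k : Fin d) :
    pd k (fun q => Real.log (Real.sqrt (f q))) p = pd k f p / (2 * f p) :=
  fderiv_log_sqrt_apply (hf.space.differentiableAt (by norm_num)) hpos _

lemma sqrt_eventuallyEq_exp_log (hf : C12At f p) (hpos : 0 < f p) :
    (fun q => Real.sqrt (f q)) =ᶠ[crossNhds p]
      fun q => Real.exp (Real.log (Real.sqrt (f q))) := by
  filter_upwards [hf.tendsto.eventually_const_lt hpos] with q hq
  exact (Real.exp_log (Real.sqrt_pos.2 hq)).symm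

lemma lap_sqrt_div_sqrt (hf : C12At f p) (hpos : 0 < f p) :
    lap (fun q => Real.sqrt (f q)) p / Real.sqrt (f p) =
      lap (fun q => Real.log (Real.sqrt (f q))) p +
        ∑ k, pd k (fun q => Real.log (Real.sqrt (f q))) p ^ 2 := by
  rw [lap_congr (sqrt_eventuallyEq_exp_log hf hpos), Real.exp_eq_exp_ℝ,
    lap_normedSpaceExp (hf.log_sqrt hpos), ← Real.exp_eq_exp_ℝ,
    Real.exp_log (Real.sqrt_pos.2 hpos), mul_div_cancel_left₀ _ (Real.sqrt_pos.2 hpos).ne']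

lemma sum_pd_mul_pd_div (hf : C12At f p) (hg : C12At g p) (c : ℝ) :
    ∑ k, pd k (fun q => f q * pd k g q / c) p =
      (f p * lap g p + ∑ k, pd k f p * pd k g p) / c := by
  rw [lap, Finset.mul_sum, ← Finset.sum_add_distrib, Finset.sum_div]
  refine Finset.sum_congr rfl fun k _ => ?_
  have hprod := ((hf.space.differentiableAt (by norm_num)).hasFDerivAt.mul
    (hg.differentiableAt_pd k).hasFDerivAt).mul_const c⁻¹
  simp only [div_eq_mul_inv]
  rw [pd]
  refine (DFunLike.congr_fun hprod.fderiv (Pi.single k 1)).trans ?_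
  simp only [add_apply, smul_apply, smul_eq_mul, pd]
  ring

end SpacetimeDerivatives

lemma ofReal_neg_add_ofReal_mul_I_eq_zero {a b : ℝ} :
    ((-a : ℝ) : ℂ) + (b : ℂ) * Complex.I = 0 ↔ a = 0 ∧ b = 0 := by
  simp [Complex.ext_iff]

section Madelung

variable {p : ℝ × (Fin d → ℝ)}

lemma schrodinger_eq_exp_mul {ψ φ : ℝ × (Fin d → ℝ) → ℂ}
    (hψ : ψ =ᶠ[crossNhds p] fun q => Complex.exp (φ q)) (hφ : C12At φ p) (m Λ K u : ℂ) :
    Complex.I * K * tdiff ψ p + (K * Λ / 2) * lap ψ p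
        + ((∑ k, pd k ψ p ^ 2) / ψ p) * (K / m - Λ) * (K / 2) - u * ψ p =
      Complex.exp (φ p) * (Complex.I * K * tdiff φ p + K * Λ / 2 * lap φ p
        + K ^ 2 / (2 * m) * ∑ k, pd k φ p ^ 2 - u) := by
  have hexp := Complex.exp_ne_zero (φ p)
  simp only [tdiff_congr hψ, pd_congr hψ, lap_congr hψ, eq_of_eventuallyEq_crossNhds hψ]
  simp only [Complex.exp_eq_exp_ℂ] at hexp ⊢
  simp only [tdiff_normedSpaceExp hφ, pd_normedSpaceExp hφ, lap_normedSpaceExp hφ, mul_pow,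
    ← Finset.mul_sum]
  rw [sq (NormedSpace.exp (φ p)), mul_assoc (NormedSpace.exp (φ p)), mul_div_cancel_left₀ _ hexp]
  ring

/-- The complex phase `φ = L + i S / K` of a wave function `exp φ` with log-amplitude `L` and
real phase `S / K`. -/
def complexPhase (K : ℝ) (L S : ℝ × (Fin d → ℝ) → ℝ) : ℝ × (Fin d → ℝ) → ℂ :=
  fun q => (L q : ℂ) + Complex.I / K * (S q : ℂ)

section ComplexPhase

variable {L S : ℝ × (Fin d → ℝ) → ℝ}

lemma C12At.complexPhase (hL : C12At L p) (hS : C12At S p) (K : ℝ) :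
    C12At (complexPhase K L S) p :=
  (hL.comp (h := fun r : ℝ => (r : ℂ)) Complex.ofRealCLM.contDiff.contDiffAt).add
    (hS.comp (h := fun r : ℝ => Complex.I / K * (r : ℂ))
      (contDiff_const.mul Complex.ofRealCLM.contDiff).contDiffAt)

lemma tdiff_complexPhase (hL : C12At L p) (hS : C12At S p) (K : ℝ) :
    tdiff (complexPhase K L S) p =
      ((tdiff L p : ℝ) : ℂ) + Complex.I / K * ((tdiff S p : ℝ) : ℂ) :=
  fderiv_ofReal_add_const_mul_apply hL.time hS.time _ 1

lemma pd_complexPhase (hL : C12At L p) (hS : C12At S p) (K : ℝ) (k : Fin d) :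
    pd k (complexPhase K L S) p =
      ((pd k L p : ℝ) : ℂ) + Complex.I / K * ((pd k S p : ℝ) : ℂ) :=
  fderiv_ofReal_add_const_mul_apply (hL.space.differentiableAt (by norm_num))
    (hS.space.differentiableAt (by norm_num)) _ _

lemma lap_complexPhase (hL : C12At L p) (hS : C12At S p) (K : ℝ) :
    lap (complexPhase K L S) p =
      ((lap L p : ℝ) : ℂ) + Complex.I / K * ((lap S p : ℝ) : ℂ) := by
  simp only [lap, Complex.ofReal_sum, Finset.mul_sum, ← Finset.sum_add_distrib]
  exact Finset.sum_congr rfl fun k _ =>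
    fderiv_fderiv_ofReal_add_const_mul_apply hL.space hS.space _ _

lemma sum_pd_complexPhase_sq (hL : C12At L p) (hS : C12At S p) (K : ℝ) :
    ∑ k, pd k (complexPhase K L S) p ^ 2 =
      ((∑ k, pd k L p ^ 2 : ℝ) : ℂ) - ((∑ k, pd k S p ^ 2 : ℝ) : ℂ) / K ^ 2
        + 2 * (Complex.I / K) * ((∑ k, pd k L p * pd k S p : ℝ) : ℂ) := by
  push_cast
  rw [Finset.sum_div, Finset.mul_sum, ← Finset.sum_sub_distrib, ← Finset.sum_add_distrib]
  refine Finset.sum_congr rfl fun k _ => ?_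
  rw [pd_complexPhase hL hS]
  linear_combination ((pd k S p : ℝ) : ℂ) ^ 2 / K ^ 2 * Complex.I_sq

lemma hamiltonJacobi_complexPhase (hL : C12At L p) (hS : C12At S p) (m Λ u : ℝ) {K : ℝ}
    (hK : K ≠ 0) :
    Complex.I * K * tdiff (complexPhase K L S) p + K * Λ / 2 * lap (complexPhase K L S) p
        + K ^ 2 / (2 * m) * ∑ k, pd k (complexPhase K L S) p ^ 2 - u =
      ((-(tdiff S p + (∑ k, pd k S p ^ 2) / (2 * m) - K ^ 2 / (2 * m) * ∑ k, pd k L p ^ 2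
          - K * Λ / 2 * lap L p + u) : ℝ) : ℂ)
        + ((K * tdiff L p + K / m * ∑ k, pd k L p * pd k S p + Λ / 2 * lap S p : ℝ) : ℂ)
          * Complex.I := by
  have hKc : (K : ℂ) ≠ 0 := by exact_mod_cast hK
  rw [sum_pd_complexPhase_sq hL hS, tdiff_complexPhase hL hS, lap_complexPhase hL hS]
  push_cast
  field_simp
  linear_combination 2 * ((tdiff S p : ℝ) : ℂ) * Complex.I_sq

end ComplexPhase

lemma hamiltonJacobi_eq_log_amplitude {S P : ℝ × (Fin d → ℝ) → ℝ} (hP : C12At P p) (hpos : 0 < P p)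
    (m Λ K u : ℝ) :
    tdiff S p + (∑ k, pd k S p ^ 2) / (2 * m)
        - K ^ 2 / (2 * m) * (lap (fun q => Real.sqrt (P q)) p / Real.sqrt (P p))
        + K / 2 * (K / m - Λ) * lap (fun q => Real.log (Real.sqrt (P q))) p + u =
      tdiff S p + (∑ k, pd k S p ^ 2) / (2 * m)
        - K ^ 2 / (2 * m) * ∑ k, pd k (fun q => Real.log (Real.sqrt (P q))) p ^ 2
        - K * Λ / 2 * lap (fun q => Real.log (Real.sqrt (P q))) p + u := by
  rw [lap_sqrt_div_sqrt hP hpos]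
  ring

lemma continuity_eq_log_amplitude {S P : ℝ × (Fin d → ℝ) → ℝ} (hS : C12At S p) (hP : C12At P p)
    (hpos : 0 < P p) (Λ : ℝ) {m K : ℝ} (hm : m ≠ 0) (hK : K ≠ 0) :
    tdiff P p + (∑ k, pd k (fun q => P q * pd k S q / m) p)
        + (P p * lap S p / m) * (m * Λ / K - 1) =
      2 * P p / K * (K * tdiff (fun q => Real.log (Real.sqrt (P q))) p
        + K / m * (∑ k, pd k (fun q => Real.log (Real.sqrt (P q))) p * pd k S p)
        + Λ / 2 * lap S p) := by
  simp only [sum_pd_mul_pd_div hP hS, tdiff_log_sqrt hP hpos, pd_log_sqrt hP hpos,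
    div_mul_eq_mul_div, ← Finset.sum_div]
  field_simp
  ring

theorem nonlinear_schrodinger_iff_real_system_general
    (m Λ K : ℝ) (hm : m ≠ 0) (hK : K ≠ 0) (S P : ℝ × (Fin d → ℝ) → ℝ)
    (U : (Fin d → ℝ) → ℝ) (ψ : ℝ × (Fin d → ℝ) → ℂ)
    (hψ : ψ = fun p => (Real.sqrt (P p) : ℂ) * Complex.exp (Complex.I * (S p : ℂ) / (K : ℂ)))
    (t : ℝ) (x : Fin d → ℝ) (hS : C12At S (t, x)) (hP : C12At P (t, x)) (hpos : 0 < P (t, x)) :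
    (Complex.I * (K : ℂ) * tdiff ψ (t, x)
        + ((K : ℂ) * (Λ : ℂ) / 2) * lap ψ (t, x)
        + ((∑ k : Fin d, (pd k ψ (t, x)) ^ 2) / ψ (t, x))
            * ((K : ℂ) / (m : ℂ) - (Λ : ℂ)) * ((K : ℂ) / 2)
        - (U x : ℂ) * ψ (t, x) = 0) ↔
      (tdiff S (t, x) + (∑ k : Fin d, (pd k S (t, x)) ^ 2) / (2 * m)
          - (K ^ 2 / (2 * m))
              * (lap (fun p => Real.sqrt (P p)) (t, x) / Real.sqrt (P (t, x)))
          + (K / 2) * (K / m - Λ) * lap (fun p => Real.log (Real.sqrt (P p))) (t, x)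
          + U x = 0
        ∧ tdiff P (t, x)
          + (∑ k : Fin d, pd k (fun p => P p * pd k S p / m) (t, x))
          + (P (t, x) * lap S (t, x) / m) * (m * Λ / K - 1) = 0) := by
  have hL := hP.log_sqrt hpos
  have hψφ : ψ =ᶠ[crossNhds (t, x)] fun q =>
      Complex.exp (complexPhase K (fun p => Real.log (Real.sqrt (P p))) S q) := by
    filter_upwards [sqrt_eventuallyEq_exp_log hP hpos] with q hq
    rw [hψ, complexPhase, Complex.exp_add, ← Complex.ofReal_exp, ← hq, div_mul_eq_mul_div]
  rw [schrodinger_eq_exp_mul hψφ (hL.complexPhase hS K), mul_eq_zero,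
    or_iff_right (Complex.exp_ne_zero _), hamiltonJacobi_complexPhase hL hS m Λ _ hK,
    ofReal_neg_add_ofReal_mul_I_eq_zero, hamiltonJacobi_eq_log_amplitude hP hpos,
    continuity_eq_log_amplitude hS hP hpos Λ hm hK, mul_eq_zero, or_iff_right (by positivity)]

end Madelung

/-- With `ψ = √P · exp(i·S/K)`, the non-linear Schrödinger equation is equivalent
to the coupled real system for `S` and `P`. -/
theorem nonlinear_schrodinger_iff_real_system
    (d : ℕ) (hd : 1 ≤ d) (m Λ K : ℝ) (hm : 0 < m) (hK : K ≠ 0)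
    (S P : ℝ × (Fin d → ℝ) → ℝ) (hS : ContDiff ℝ 2 S) (hP : ContDiff ℝ 2 P)
    (hPpos : ∀ p, 0 < P p)
    (U : (Fin d → ℝ) → ℝ)
    (ψ : ℝ × (Fin d → ℝ) → ℂ)
    (hψ : ψ = fun p => (Real.sqrt (P p) : ℂ) * Complex.exp (Complex.I * (S p : ℂ) / (K : ℂ)))
    (t : ℝ) (x : Fin d → ℝ) :
    (Complex.I * (K : ℂ) * tdiff ψ (t, x)
        + ((K : ℂ) * (Λ : ℂ) / 2) * lap ψ (t, x)
        + ((∑ k : Fin d, (pd k ψ (t, x)) ^ 2) / ψ (t, x))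
            * ((K : ℂ) / (m : ℂ) - (Λ : ℂ)) * ((K : ℂ) / 2)
        - (U x : ℂ) * ψ (t, x) = 0) ↔
      (tdiff S (t, x) + (∑ k : Fin d, (pd k S (t, x)) ^ 2) / (2 * m)
          - (K ^ 2 / (2 * m))
              * (lap (fun p => Real.sqrt (P p)) (t, x) / Real.sqrt (P (t, x)))
          + (K / 2) * (K / m - Λ) * lap (fun p => Real.log (Real.sqrt (P p))) (t, x)
          + U x = 0
        ∧ tdiff P (t, x)
          + (∑ k : Fin d, pd k (fun p => P p * pd k S p / m) (t, x))
          + (P (t, x) * lap S (t, x) / m) * (m * Λ / K - 1) = 0) := by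
  exact nonlinear_schrodinger_iff_real_system_general m Λ K hm.ne' hK S P U ψ hψ t x
    (.of_contDiff hS _) (.of_contDiff hP _) (hPpos _)
end
end

section
/- Let G > 0, M > 0, m > 0 and Λ ≠ 0 be real and set r₀ = 2·Λ²/(G·M). Let c > 0 and define f : ℝ³∖{0} → ℝ by f(x) = c·exp(−2·|x|/r₀). Then for every x ≠ 0: (i) Δf(x) = (4/r₀² − 4/(r₀·|x|))·f(x); and consequently (ii) the additional potential U_add(x) := −(m·Λ²/2)·(Δf(x))/f(x) satisfies U_add(x) = −(G·M·m/r₀)·(1 − r₀/|x|). -/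
noncomputable section

variable {F : Type*} [NormedAddCommGroup F] [NormedSpace ℝ F]

/-- Partial derivative in the `k`-th coordinate of a function on Euclidean `ℝ³`. -/
def pds (k : Fin 3) (f : EuclideanSpace ℝ (Fin 3) → F) : EuclideanSpace ℝ (Fin 3) → F :=
  fun x => fderiv ℝ f x (EuclideanSpace.single k 1)

/-- Laplacian of a function on Euclidean `ℝ³`. -/
def laps (f : EuclideanSpace ℝ (Fin 3) → F) : EuclideanSpace ℝ (Fin 3) → F :=
  fun x => ∑ k : Fin 3, pds k (pds k f) x

/-!
Away from the origin, a radial function `x ↦ φ ‖x‖` has derivative `v ↦ ⟪x, v⟫ • ψ ‖x‖` with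
`ψ r = r⁻¹ • φ' r`, and `ψ ‖·‖` is again radial. The product rule therefore gives the Hessian, and
its trace is `φ'' + ((n - 1) / r) • φ'` in dimension `n`. For `φ r = c * exp (-2 * r / r₀)` each
derivative multiplies by `-2 / r₀`, so `Δf / f` is `4 / r₀² - 2 * (n - 1) / (r₀ * r)`, and
`Λ² = G * M * r₀ / 2` turns it into the additional potential.
-/

section RadialLaplacian

open Laplacian InnerProductSpace
open scoped Topology

variable {E : Type*} [NormedAddCommGroup E] [InnerProductSpace ℝ E] {x : E}
  {φ φ' : ℝ → F} {φ'' : F}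

theorem hasFDerivAt_norm_of_ne_zero (hx : x ≠ 0) :
    HasFDerivAt (fun y : E ↦ ‖y‖) (‖x‖⁻¹ • innerSL ℝ x) x := by
  have hsqrt := (hasStrictFDerivAt_norm_sq x).hasFDerivAt.sqrt (by positivity)
  simp only [Real.sqrt_sq (norm_nonneg _)] at hsqrt
  refine hsqrt.congr_fderiv ?_
  ext v
  simp [field]

theorem hasFDerivAt_comp_norm {d : F} (hφ : HasDerivAt φ d ‖x‖) (hx : x ≠ 0) :
    HasFDerivAt (fun y : E ↦ φ ‖y‖) ((innerSL ℝ x).smulRight (‖x‖⁻¹ • d)) x := by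
  refine (hφ.hasFDerivAt.comp x (hasFDerivAt_norm_of_ne_zero hx)).congr_fderiv ?_
  ext v
  simp [smul_smul, mul_comm]

theorem fderiv_comp_norm_eventuallyEq (hφ : ∀ᶠ r in 𝓝 ‖x‖, HasDerivAt φ (φ' r) r)
    (hx : x ≠ 0) :
    fderiv ℝ (fun y : E ↦ φ ‖y‖) =ᶠ[𝓝 x]
      fun y ↦ (innerSL ℝ y).smulRight (‖y‖⁻¹ • φ' ‖y‖) := by
  filter_upwards [continuous_norm.continuousAt.eventually hφ, eventually_ne_nhds hx] with y hy hy0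
  exact (hasFDerivAt_comp_norm hy hy0).fderiv

theorem fderiv_fderiv_comp_norm_apply (hφ : ∀ᶠ r in 𝓝 ‖x‖, HasDerivAt φ (φ' r) r)
    (hφ' : HasDerivAt φ' φ'' ‖x‖) (hx : x ≠ 0) (v w : E) :
    fderiv ℝ (fderiv ℝ (fun y : E ↦ φ ‖y‖)) x v w =
      (⟪x, v⟫_ℝ * ⟪x, w⟫_ℝ) • (‖x‖⁻¹ ^ 2 • φ'' - ‖x‖⁻¹ ^ 3 • φ' ‖x‖) +
        ⟪v, w⟫_ℝ • ‖x‖⁻¹ • φ' ‖x‖ := by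
  have hr : ‖x‖ ≠ 0 := norm_ne_zero_iff.mpr hx
  have hψ := hasFDerivAt_comp_norm ((hasDerivAt_inv hr).smul hφ') hx
  have hHess := (ContinuousLinearMap.smulRightL ℝ E F).hasFDerivAt_of_bilinear
    (innerSL ℝ (E := E)).hasFDerivAt hψ
  have hfderiv := hHess.congr_of_eventuallyEq (fderiv_comp_norm_eventuallyEq hφ hx)
  rw [hfderiv.fderiv]
  simp only [ContinuousLinearMap.precompR_apply, ContinuousLinearMap.precompL_apply,
    ContinuousLinearMap.compL_apply, ContinuousLinearMap.comp_apply,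
    ContinuousLinearMap.smulRight_apply, ContinuousLinearMap.smulRightL_apply_apply,
    innerSL_apply_apply ℝ, Pi.smul_apply', add_apply, smul_apply, map_smul]
  module

theorem laplacian_eq_sum_fderiv_fderiv_orthonormalBasis {ι : Type*} [Fintype ι]
    [FiniteDimensional ℝ E] (b : OrthonormalBasis ι ℝ E) (f : E → F) (x : E) :
    Δ f x = ∑ i, fderiv ℝ (fderiv ℝ f) x (b i) (b i) := by
  simp [laplacian_eq_iteratedFDeriv_orthonormalBasis f b, iteratedFDeriv_two_apply]

theorem laplacian_comp_norm [FiniteDimensional ℝ E]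
    (hφ : ∀ᶠ r in 𝓝 ‖x‖, HasDerivAt φ (φ' r) r) (hφ' : HasDerivAt φ' φ'' ‖x‖) (hx : x ≠ 0) :
    Δ (fun y : E ↦ φ ‖y‖) x =
      φ'' + ((Module.finrank ℝ E - 1 : ℝ) / ‖x‖) • φ' ‖x‖ := by
  have hr : ‖x‖ ≠ 0 := norm_ne_zero_iff.mpr hx
  let b := stdOrthonormalBasis ℝ E
  have hsum : ∑ i, ⟪x, b i⟫_ℝ * ⟪x, b i⟫_ℝ = ‖x‖ ^ 2 := by
    simpa only [← pow_two] using b.sum_sq_inner_left x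
  have htrace : ∑ i, ⟪b i, b i⟫_ℝ = Module.finrank ℝ E := by simp
  simp only [laplacian_eq_sum_fderiv_fderiv_orthonormalBasis b,
    fderiv_fderiv_comp_norm_apply hφ hφ' hx, Finset.sum_add_distrib, ← Finset.sum_smul,
    hsum, htrace]
  match_scalars <;> field_simp
  ring

theorem laplacian_const_mul_exp_norm [FiniteDimensional ℝ E] (a c : ℝ) (hx : x ≠ 0) :
    Δ (fun y : E ↦ c * Real.exp (a * ‖y‖)) x =
      (a ^ 2 + (Module.finrank ℝ E - 1) * a / ‖x‖) * (c * Real.exp (a * ‖x‖)) := by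
  have hderiv (k r : ℝ) :
      HasDerivAt (fun s ↦ k * Real.exp (a * s)) (k * a * Real.exp (a * r)) r := by
    refine (((hasDerivAt_id r).const_mul a).exp.const_mul k).congr_deriv ?_
    simp only [id_eq]
    ring
  rw [laplacian_comp_norm (φ := fun r ↦ c * Real.exp (a * r))
    (.of_forall (hderiv c)) (hderiv (c * a) ‖x‖) hx, smul_eq_mul]
  ring

theorem contDiffAt_const_mul_exp_norm_div (a r c : ℝ) {n : WithTop ℕ∞} (hx : x ≠ 0) :
    ContDiffAt ℝ n (fun y : E ↦ c * Real.exp (a * ‖y‖ / r)) x :=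
  contDiffAt_const.mul ((contDiffAt_const.mul (contDiffAt_norm ℝ hx)).div_const r).exp

theorem laps_eq_laplacian {f : EuclideanSpace ℝ (Fin 3) → F} {x : EuclideanSpace ℝ (Fin 3)}
    (hf : ContDiffAt ℝ 2 f x) : laps f x = Δ f x := by
  have hf' : DifferentiableAt ℝ (fderiv ℝ f) x :=
    (hf.fderiv_right (m := 1) (by norm_num)).differentiableAt (by norm_num)
  rw [laplacian_eq_sum_fderiv_fderiv_orthonormalBasis (EuclideanSpace.basisFun (Fin 3) ℝ)]
  refine Finset.sum_congr rfl fun k _ ↦ ?_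
  unfold pds
  simp [fderiv_clm_apply hf' (differentiableAt_const _)]

theorem ground_state_laplacian_and_additional_potential_general [FiniteDimensional ℝ E]
    (G M m Λ r₀ : ℝ) (hG : G ≠ 0) (hM : M ≠ 0) (hΛ : Λ ≠ 0) (hr₀ : r₀ = 2 * Λ ^ 2 / (G * M))
    (c : ℝ) (hc : c ≠ 0) (f : E → ℝ) (hf : f = fun x ↦ c * Real.exp (-2 * ‖x‖ / r₀))
    (Uadd : E → ℝ) (hUadd : Uadd = fun x ↦ -(m * Λ ^ 2 / 2) * (Δ f x / f x)) (hx : x ≠ 0) :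
    Δ f x = (4 / r₀ ^ 2 - 2 * (Module.finrank ℝ E - 1) / (r₀ * ‖x‖)) * f x ∧
      Uadd x = -(G * M * m / r₀) * (1 - (Module.finrank ℝ E - 1) / 2 * (r₀ / ‖x‖)) := by
  have hf_exp : f = fun y ↦ c * Real.exp (-2 / r₀ * ‖y‖) := by
    simp only [hf, mul_div_right_comm]
  have hfx : f x ≠ 0 := by simp [hf, hc]
  have hΔ : Δ f x = (4 / r₀ ^ 2 - 2 * (Module.finrank ℝ E - 1) / (r₀ * ‖x‖)) * f x := by
    rw [hf_exp, laplacian_const_mul_exp_norm _ _ hx]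
    ring
  have hr₀_ne : r₀ ≠ 0 := by simp [hr₀, hG, hM, hΛ]
  have hΛ_sq : Λ ^ 2 = G * M * r₀ / 2 := by
    rw [hr₀]
    field_simp
  refine ⟨hΔ, ?_⟩
  simp only [hUadd, hΔ, mul_div_cancel_right₀ _ hfx, hΛ_sq]
  field_simp
  ring

end RadialLaplacian

/-- The Laplacian of the ground-state amplitude `f(x) = c·exp(−2|x|/r₀)` with
`r₀ = 2Λ²/(GM)`, and the resulting additional potential `U_add`. -/
theorem ground_state_laplacian_and_additional_potential
    (G M m Λ r₀ : ℝ) (hG : 0 < G) (hM : 0 < M) (hm : 0 < m) (hΛ : Λ ≠ 0)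
    (hr₀ : r₀ = 2 * Λ ^ 2 / (G * M))
    (c : ℝ) (hc : 0 < c)
    (f : EuclideanSpace ℝ (Fin 3) → ℝ)
    (hf : f = fun x => c * Real.exp (-2 * ‖x‖ / r₀))
    (Uadd : EuclideanSpace ℝ (Fin 3) → ℝ)
    (hUadd : Uadd = fun x => -(m * Λ ^ 2 / 2) * (laps f x / f x)) :
    ∀ x : EuclideanSpace ℝ (Fin 3), x ≠ 0 →
      laps f x = (4 / r₀ ^ 2 - 4 / (r₀ * ‖x‖)) * f x ∧
      Uadd x = -(G * M * m / r₀) * (1 - r₀ / ‖x‖) := by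
  intro x hx
  have hlaps := laps_eq_laplacian (hf ▸ contDiffAt_const_mul_exp_norm_div (-2) r₀ c hx)
  have h := ground_state_laplacian_and_additional_potential_general G M m Λ r₀ hG.ne' hM.ne' hΛ hr₀
    c hc.ne' f hf _ rfl hx
  norm_num [hUadd, hlaps] at h ⊢
  exact h
end
end
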